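/- Fix x ∈ (0, 1) and let q♭(t) = F_q(t, 0, √2), so that (q♭)⁻¹(x) is well defined. Let u(t, x) = F_p(t, Δ(t, x)). Then for every t > (q♭)⁻¹(x) one has u(t, x) < √(2(1 − g(x))), and the map t ↦ u(t, x) is nonincreasing on ((q♭)⁻¹(x), +∞). -/

import Mathlib

open Real Set Filter MeasureTheory
open scoped Topology

/-- The potential `g` from the Hamiltonian `H(x,p) = p²/2 + g(x)`. -/
noncomputable def g (x : ℝ) : ℝ := if |x| ≤ 1 then 1 - (1 - x ^ 2) ^ 4 else 1

/-- The derivative of `g`. -/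
noncomputable def g' (x : ℝ) : ℝ := if |x| ≤ 1 then 8 * x * (1 - x ^ 2) ^ 3 else 0

/-- `(q, p)` is a (global) solution of the Hamiltonian system (HS): `q̇ = p`, `ṗ = -g'(q)`. -/
def IsHSSol (q p : ℝ → ℝ) : Prop :=
  (∀ t : ℝ, HasDerivAt q (p t) t) ∧ (∀ t : ℝ, HasDerivAt p (-(g' (q t))) t)

/-- `F` is the flow of (HS): `F t q₀ p₀ = (q t, p t)` for the solution with data `(q₀, p₀)`. -/
def IsHSFlow (F : ℝ → ℝ → ℝ → ℝ × ℝ) : Prop :=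
  ∀ q₀ p₀ : ℝ,
    IsHSSol (fun t => (F t q₀ p₀).1) (fun t => (F t q₀ p₀).2) ∧ F 0 q₀ p₀ = (q₀, p₀)

/-- The set `([0,∞) × {2}) ∪ ({0} × (0,2])`, codomain of the map `Δ`. -/
def Dset : Set (ℝ × ℝ) := (Ici (0:ℝ) ×ˢ ({2} : Set ℝ)) ∪ ({(0:ℝ)} ×ˢ Ioc (0:ℝ) 2)

/-- `T` is the smallest positive period of `q`. -/
def IsSmallestPeriod (q : ℝ → ℝ) (T : ℝ) : Prop :=
  0 < T ∧ Function.Periodic q T ∧ ∀ T' : ℝ, 0 < T' → Function.Periodic q T' → T ≤ T'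

/-- `T` is the period map `𝒯`, assigning to `p₀ ∈ (0, √2)` the smallest positive period of
the `q`-component of the solution of (HS) with initial datum `(0, p₀)`. -/
def IsPeriodMap (F : ℝ → ℝ → ℝ → ℝ × ℝ) (T : ℝ → ℝ) : Prop :=
  ∀ p₀ ∈ Ioo (0:ℝ) (Real.sqrt 2), IsSmallestPeriod (fun t => (F t 0 p₀).1) (T p₀)

/-- `Δ` associates to `(t,x)` the datum in `Dset` whose orbit stays positive on `(0,t)`
and reaches `x` at time `t`. -/
def IsDeltaMap (F : ℝ → ℝ → ℝ → ℝ × ℝ) (Δ : ℝ → ℝ → ℝ × ℝ) : Prop :=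
  ∀ t x : ℝ, 0 < t → 0 < x →
    Δ t x ∈ Dset ∧ (F t (Δ t x).1 (Δ t x).2).1 = x ∧
      ∀ s ∈ Ioo (0:ℝ) t, 0 < (F s (Δ t x).1 (Δ t x).2).1

/-- The solution `u` of the conservation law built from the flow `F` and the map `Δ`
(extended by `0` at `x = 0`). -/
noncomputable def usol (F : ℝ → ℝ → ℝ → ℝ × ℝ) (Δ : ℝ → ℝ → ℝ × ℝ) (t x : ℝ) : ℝ :=
  if 0 < x then (F t (Δ t x).1 (Δ t x).2).2
  else if x < 0 then -(F t (Δ t (-x)).1 (Δ t (-x)).2).2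
  else 0

/-!
On `(0, ∞)` the force `g'` is nonnegative and `g' x / x` is nonincreasing. For two orbits
`q₁, q₂` starting at `0`, the Wronskian `q₁ p₂ - q₂ p₁` is then nonnegative as long as
`0 < q₁ ≤ q₂`, so `q₂ / q₁` is nondecreasing: the orbit with the larger initial momentum stays
strictly ahead. Together with conservation of energy and the concavity of positive orbits, this
orders the momenta with which two orbits reach the same point at different times.

The orbit of `(0, √2)` is the separatrix. With `κ x = max (1 - x²) 0` we have `g = 1 - κ⁴`, and
along the separatrix both `p - √2 κ(q)²` and `p` solve linear equations; hence
`p = √2 κ(q)² > 0`, and the orbit increases from `0` through every `x ∈ (0, 1)`. By comparison,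
an orbit from `Dset` that reaches `x` later than the separatrix does starts at `(0, p₀)` with
`0 < p₀ < √2`.
-/

section RealFunctions

variable {f f' a : ℝ → ℝ} {t t₀ : ℝ}

theorem eventually_nhdsGT_pos_of_hasDerivAt {c : ℝ} (hf : HasDerivAt f c t₀) (hc : 0 < c)
    (h₀ : f t₀ = 0) : ∀ᶠ s in 𝓝[>] t₀, 0 < f s := by
  have hsign := eventually_nhdsWithin_sign_eq_of_deriv_pos (hf.deriv ▸ hc) h₀
  filter_upwards [nhdsWithin_le_nhds hsign, self_mem_nhdsWithin] with s hs hts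
  rwa [sign_pos (sub_pos.2 hts), sign_eq_one_iff] at hs

theorem exists_first_zero_of_eventually_pos (hf : Continuous f)
    (hpos : ∀ᶠ s in 𝓝[>] t₀, 0 < f s) (ht : t₀ < t) (hft : f t ≤ 0) :
    ∃ s ∈ Ioc t₀ t, f s = 0 ∧ ∀ r ∈ Ioo t₀ s, 0 < f r := by
  obtain ⟨b, hb, hpos_b⟩ := mem_nhdsGT_iff_exists_Ioo_subset.1 hpos
  obtain ⟨m, htm, hm⟩ := exists_between (lt_min hb ht)
  obtain ⟨hmb, hmt⟩ := lt_min_iff.1 hm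
  obtain ⟨s, ⟨hs, hfs⟩, hleast⟩ := (isCompact_Icc.inter_right
    (isClosed_Iic.preimage hf)).exists_isLeast (s := Icc m t ∩ f ⁻¹' Iic 0)
    ⟨t, right_mem_Icc.2 hmt.le, hft⟩
  have hts : t₀ < s := htm.trans_le hs.1
  have hpos_s : ∀ r ∈ Ioo t₀ s, 0 < f r := fun r hr => by
    rcases lt_or_ge r m with hrm | hmr
    · exact hpos_b ⟨hr.1, hrm.trans hmb⟩
    · by_contra! hfr
      exact hr.2.not_ge (hleast ⟨⟨hmr, hr.2.le.trans hs.2⟩, hfr⟩)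
  have hnonneg : 0 ≤ f s := ge_of_tendsto (hf.continuousWithinAt (s := Iio s))
    (by filter_upwards [Ioo_mem_nhdsLT hts] with r hr using (hpos_s r hr).le)
  exact ⟨s, ⟨hts, hs.2⟩, le_antisymm hfs hnonneg, hpos_s⟩

theorem antitoneOn_Icc_of_hasDerivAt_nonpos {b c : ℝ} (hf : ∀ s, HasDerivAt f (f' s) s)
    (hf' : ∀ s ∈ Ioo b c, f' s ≤ 0) : AntitoneOn f (Icc b c) :=
  antitoneOn_of_hasDerivWithinAt_nonpos (convex_Icc b c)
    (fun s _ => (hf s).continuousAt.continuousWithinAt) (fun s _ => (hf s).hasDerivWithinAt)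
    (by simpa only [interior_Icc] using hf')

theorem eq_mul_exp_integral_of_hasDerivAt_eq_mul (ha : Continuous a)
    (hf : ∀ t, HasDerivAt f (a t * f t) t) (t : ℝ) : f t = f 0 * exp (∫ s in 0..t, a s) := by
  have hconst : ∀ t, HasDerivAt (fun t => f t * exp (-∫ s in 0..t, a s)) 0 t := fun t =>
    ((hf t).mul (ha.integral_hasStrictDerivAt 0 t).hasDerivAt.neg.exp).congr_deriv (by ring)
  have heq := is_const_of_deriv_eq_zero (fun t => (hconst t).differentiableAt)
    (fun t => (hconst t).deriv) t 0
  rw [exp_neg, ← div_eq_mul_inv, div_eq_iff (exp_pos _).ne'] at heq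
  simpa using heq

theorem hasDerivAt_max_zero_sq (y : ℝ) :
    HasDerivAt (fun y : ℝ => max y 0 ^ 2) (2 * max y 0) y := by
  refine hasDerivAt_of_hasDerivAt_of_ne' (x := 0) (g := fun y => 2 * max y 0) (fun y hy => ?_)
    (by fun_prop) (by fun_prop) y
  rcases hy.lt_or_gt with hneg | hpos
  · have heq : (fun y : ℝ => max y 0 ^ 2) =ᶠ[𝓝 y] fun _ => 0 := by
      filter_upwards [Iio_mem_nhds hneg] with z hz
      rw [max_eq_right (le_of_lt hz), zero_pow two_ne_zero]
    simpa only [max_eq_right hneg.le, mul_zero] using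
      (hasDerivAt_const y (0 : ℝ)).congr_of_eventuallyEq heq
  · have heq : (fun y : ℝ => max y 0 ^ 2) =ᶠ[𝓝 y] fun y => y ^ 2 := by
      filter_upwards [Ioi_mem_nhds hpos] with z hz
      rw [max_eq_left (le_of_lt hz)]
    simpa [max_eq_left hpos.le] using (hasDerivAt_pow 2 y).congr_of_eventuallyEq heq

end RealFunctions

/-- `(q, p)` is a global solution of Newton's equation `q̈ = -f(q)` with momentum `p = q̇`. -/
structure IsNewtonSol (f q p : ℝ → ℝ) : Prop where
  hasDerivAt_position : ∀ t, HasDerivAt q (p t) t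
  hasDerivAt_momentum : ∀ t, HasDerivAt p (-f (q t)) t

/-- A solution of Newton's equation that starts at position `0` and has positive position at all
times in `(0, t]`. -/
structure IsExcursion (f q p : ℝ → ℝ) (t : ℝ) : Prop extends IsNewtonSol f q p where
  position_zero : q 0 = 0
  position_pos : ∀ s ∈ Ioc 0 t, 0 < q s

section Newton

variable {f V q p q₁ p₁ q₂ p₂ : ℝ → ℝ} {s t t₁ t₂ b c : ℝ}

namespace IsNewtonSol

theorem continuous_position (h : IsNewtonSol f q p) : Continuous q :=
  continuous_iff_continuousAt.2 fun t => (h.hasDerivAt_position t).continuousAt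

theorem continuous_momentum (h : IsNewtonSol f q p) : Continuous p :=
  continuous_iff_continuousAt.2 fun t => (h.hasDerivAt_momentum t).continuousAt

theorem energy_eq (h : IsNewtonSol f q p) (hV : ∀ x, HasDerivAt V (f x) x) (t : ℝ) :
    p t ^ 2 + 2 * V (q t) = p 0 ^ 2 + 2 * V (q 0) := by
  have hconst : ∀ s, HasDerivAt (fun s => p s ^ 2 + 2 * V (q s)) 0 s := fun s =>
    (((h.hasDerivAt_momentum s).pow 2).add
      (((hV (q s)).comp s (h.hasDerivAt_position s)).const_mul 2)).congr_deriv
      (by push_cast; ring)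
  exact is_const_of_deriv_eq_zero (fun s => (hconst s).differentiableAt)
    (fun s => (hconst s).deriv) t 0

theorem antitoneOn_momentum (h : IsNewtonSol f q p) (hf : ∀ x, 0 < x → 0 ≤ f x)
    (hq : ∀ s ∈ Ioo b c, 0 < q s) : AntitoneOn p (Icc b c) :=
  antitoneOn_Icc_of_hasDerivAt_nonpos h.hasDerivAt_momentum
    fun s hs => neg_nonpos.2 (hf _ (hq s hs))

theorem position_le_of_momentum_nonneg (h : IsNewtonSol f q p) (hbc : b ≤ c)
    (hp : ∀ s ∈ Ioo b c, 0 ≤ p s) : q b ≤ q c :=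
  monotoneOn_of_hasDerivWithinAt_nonneg (convex_Icc b c) h.continuous_position.continuousOn
    (fun s _ => (h.hasDerivAt_position s).hasDerivWithinAt)
    (by simpa only [interior_Icc] using hp) (left_mem_Icc.2 hbc) (right_mem_Icc.2 hbc) hbc

theorem position_le_of_momentum_nonpos (h : IsNewtonSol f q p) (hbc : b ≤ c)
    (hp : ∀ s ∈ Ioo b c, p s ≤ 0) : q c ≤ q b :=
  antitoneOn_Icc_of_hasDerivAt_nonpos h.hasDerivAt_position hp (left_mem_Icc.2 hbc)
    (right_mem_Icc.2 hbc) hbc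

theorem mul_le_position_sub (h : IsNewtonSol f q p) (ht : 0 ≤ t) (hp : ∀ s, 0 < s → c ≤ p s) :
    c * t ≤ q t - q 0 := by
  simpa using (convex_Ici 0).mul_sub_le_image_sub_of_le_deriv h.continuous_position.continuousOn
    (fun s _ => (h.hasDerivAt_position s).differentiableAt.differentiableWithinAt)
    (by simpa [(h.hasDerivAt_position _).deriv] using hp) 0 self_mem_Ici t ht ht

theorem position_sub_le_mul (h : IsNewtonSol f q p) (ht : 0 ≤ t) (hp : ∀ s, 0 < s → p s ≤ c) :
    q t - q 0 ≤ c * t := by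
  simpa using (convex_Ici 0).image_sub_le_mul_sub_of_deriv_le h.continuous_position.continuousOn
    (fun s _ => (h.hasDerivAt_position s).differentiableAt.differentiableWithinAt)
    (by simpa [(h.hasDerivAt_position _).deriv] using hp) 0 self_mem_Ici t ht ht

theorem hasDerivAt_wronskian (h₁ : IsNewtonSol f q₁ p₁) (h₂ : IsNewtonSol f q₂ p₂) (t : ℝ) :
    HasDerivAt (fun t => q₂ t * p₁ t - q₁ t * p₂ t)
      (q₁ t * f (q₂ t) - q₂ t * f (q₁ t)) t :=
  (((h₂.hasDerivAt_position t).mul (h₁.hasDerivAt_momentum t)).sub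
    ((h₁.hasDerivAt_position t).mul (h₂.hasDerivAt_momentum t))).congr_deriv (by ring)

end IsNewtonSol

namespace IsExcursion

theorem mono (h : IsExcursion f q p t) (hst : s ≤ t) : IsExcursion f q p s where
  __ := h
  position_pos r hr := h.position_pos r ⟨hr.1, hr.2.trans hst⟩

theorem momentum_zero_nonneg (h : IsExcursion f q p t) (ht : 0 < t) : 0 ≤ p 0 := by
  by_contra! hp
  have hneg : ∀ᶠ s in 𝓝[>] 0, 0 < -q s := eventually_nhdsGT_pos_of_hasDerivAt
    (h.hasDerivAt_position 0).neg (neg_pos.2 hp) (neg_eq_zero.2 h.position_zero)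
  obtain ⟨s, hqs, hs⟩ := (hneg.and (Ioc_mem_nhdsGT ht)).exists
  linarith [h.position_pos s hs]

theorem wronskian_nonpos (h₁ : IsExcursion f q₁ p₁ t) (h₂ : IsNewtonSol f q₂ p₂)
    (hf : AntitoneOn (fun x => f x / x) (Ioi 0)) (h₂_zero : q₂ 0 = 0)
    (hle : ∀ s ∈ Ioo 0 t, q₁ s ≤ q₂ s) (hs : s ∈ Icc 0 t) :
    q₂ s * p₁ s - q₁ s * p₂ s ≤ 0 := by
  have hanti : AntitoneOn (fun r => q₂ r * p₁ r - q₁ r * p₂ r) (Icc 0 t) := by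
    refine antitoneOn_Icc_of_hasDerivAt_nonpos (h₁.hasDerivAt_wronskian h₂) fun r hr => ?_
    have hq₁ : 0 < q₁ r := h₁.position_pos r ⟨hr.1, hr.2.le⟩
    have hq₂ : 0 < q₂ r := hq₁.trans_le (hle r hr)
    have hforce := hf hq₁ hq₂ (hle r hr)
    rw [div_le_div_iff₀ hq₂ hq₁] at hforce
    linarith
  simpa [h₁.position_zero, h₂_zero] using
    hanti (left_mem_Icc.2 (hs.1.trans hs.2)) hs hs.1

theorem monotoneOn_position_div (h₁ : IsExcursion f q₁ p₁ t) (h₂ : IsNewtonSol f q₂ p₂)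
    (hf : AntitoneOn (fun x => f x / x) (Ioi 0)) (h₂_zero : q₂ 0 = 0)
    (hle : ∀ s ∈ Ioo 0 t, q₁ s ≤ q₂ s) : MonotoneOn (fun s => q₂ s / q₁ s) (Ioc 0 t) := by
  have hderiv : ∀ s ∈ Ioc 0 t, HasDerivAt (fun s => q₂ s / q₁ s)
      ((p₂ s * q₁ s - q₂ s * p₁ s) / q₁ s ^ 2) s := fun s hs =>
    (h₂.hasDerivAt_position s).div (h₁.hasDerivAt_position s) (h₁.position_pos s hs).ne'
  refine monotoneOn_of_hasDerivWithinAt_nonneg (convex_Ioc 0 t)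
    (fun s hs => (hderiv s hs).continuousAt.continuousWithinAt)
    (fun s hs => (hderiv s (interior_subset hs)).hasDerivWithinAt) fun s hs => ?_
  have hwronskian :=
    h₁.wronskian_nonpos h₂ hf h₂_zero hle (Ioc_subset_Icc_self (interior_subset hs))
  exact div_nonneg (by linarith) (sq_nonneg _)

theorem position_lt (h₁ : IsExcursion f q₁ p₁ t) (h₂ : IsNewtonSol f q₂ p₂)
    (hf : AntitoneOn (fun x => f x / x) (Ioi 0)) (h₂_zero : q₂ 0 = 0) (hp : p₁ 0 < p₂ 0)
    (hs : s ∈ Ioc 0 t) : q₁ s < q₂ s := by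
  by_contra! hle
  have hahead : ∀ᶠ r in 𝓝[>] 0, 0 < q₂ r - q₁ r := eventually_nhdsGT_pos_of_hasDerivAt
    ((h₂.hasDerivAt_position 0).sub (h₁.hasDerivAt_position 0)) (sub_pos.2 hp)
    (by simp [h₁.position_zero, h₂_zero])
  obtain ⟨m, hm, hmeet, hlt⟩ := exists_first_zero_of_eventually_pos
    (h₂.continuous_position.sub h₁.continuous_position) hahead hs.1 (sub_nonpos.2 hle)
  have h₁m : IsExcursion f q₁ p₁ m := h₁.mono (hm.2.trans hs.2)
  obtain ⟨r, hr⟩ : (Ioo 0 m).Nonempty := nonempty_Ioo.2 hm.1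
  have hratio : q₂ r / q₁ r ≤ q₂ m / q₁ m :=
    h₁m.monotoneOn_position_div h₂ hf h₂_zero (fun r hr => (sub_pos.1 (hlt r hr)).le)
      ⟨hr.1, hr.2.le⟩ (right_mem_Ioc.2 hm.1) hr.2.le
  have hone_lt : 1 < q₂ r / q₁ r :=
    (one_lt_div (h₁m.position_pos r ⟨hr.1, hr.2.le⟩)).2 (sub_pos.1 (hlt r hr))
  rw [sub_eq_zero.1 hmeet, div_self (h₁m.position_pos m (right_mem_Ioc.2 hm.1)).ne'] at hratio
  exact hone_lt.not_ge hratio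

theorem antitoneOn_momentum (h : IsExcursion f q p t) (hf : ∀ x, 0 < x → 0 ≤ f x) :
    AntitoneOn p (Icc 0 t) :=
  h.toIsNewtonSol.antitoneOn_momentum hf fun s hs => h.position_pos s ⟨hs.1, hs.2.le⟩

theorem later_arrival_momentum_nonpos (h₁ : IsExcursion f q₁ p₁ t₁)
    (h₂ : IsExcursion f q₂ p₂ t₂) (hf_nonneg : ∀ x, 0 < x → 0 ≤ f x)
    (hf : AntitoneOn (fun x => f x / x) (Ioi 0)) (ht₁ : 0 < t₁) (ht : t₁ ≤ t₂)
    (hq : q₁ t₁ = q₂ t₂) (hp : p₁ 0 < p₂ 0) : p₂ t₂ ≤ 0 := by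
  by_contra! hpos
  have hahead : q₁ t₁ < q₂ t₁ :=
    h₁.position_lt h₂.toIsNewtonSol hf h₂.position_zero hp (right_mem_Ioc.2 ht₁)
  have hincr : q₂ t₁ ≤ q₂ t₂ := h₂.position_le_of_momentum_nonneg ht fun s hs =>
    hpos.le.trans <| h₂.antitoneOn_momentum hf_nonneg ⟨(ht₁.trans hs.1).le, hs.2.le⟩
      (right_mem_Icc.2 (ht₁.trans_le ht).le) hs.2.le
  linarith

theorem earlier_arrival_momentum_nonneg (h₁ : IsExcursion f q₁ p₁ t₁)
    (h₂ : IsExcursion f q₂ p₂ t₂) (hf_nonneg : ∀ x, 0 < x → 0 ≤ f x)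
    (hf : AntitoneOn (fun x => f x / x) (Ioi 0)) (ht₁ : 0 < t₁) (ht : t₁ ≤ t₂)
    (hq : q₁ t₁ = q₂ t₂) (hp : p₂ 0 < p₁ 0) : 0 ≤ p₁ t₁ := by
  by_contra! hneg
  have hahead : ∀ s ∈ Ioc 0 t₂, q₂ s < q₁ s := fun s hs =>
    h₂.position_lt h₁.toIsNewtonSol hf h₁.position_zero hp hs
  have h₁' : IsExcursion f q₁ p₁ t₂ :=
    { h₁ with position_pos := fun s hs => (h₂.position_pos s hs).trans (hahead s hs) }
  have hdecr : q₁ t₂ ≤ q₁ t₁ := h₁.position_le_of_momentum_nonpos ht fun s hs =>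
    (h₁'.antitoneOn_momentum hf_nonneg ⟨ht₁.le, ht⟩ ⟨(ht₁.trans hs.1).le, hs.2.le⟩
      hs.1.le).trans hneg.le
  linarith [hahead t₂ (right_mem_Ioc.2 (ht₁.trans_le ht))]

theorem arrival_momentum_le (h₁ : IsExcursion f q₁ p₁ t₁)
    (h₂ : IsExcursion f q₂ p₂ t₂) (hf_nonneg : ∀ x, 0 < x → 0 ≤ f x)
    (hf : AntitoneOn (fun x => f x / x) (Ioi 0)) (ht₁ : 0 < t₁) (ht : t₁ ≤ t₂)
    (hq : q₁ t₁ = q₂ t₂) (hV : ∀ x, HasDerivAt V (f x) x) (hp : p₁ 0 ≠ p₂ 0) : p₂ t₂ ≤ p₁ t₁ := by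
  have henergy : p₂ t₂ ^ 2 - p₁ t₁ ^ 2 = p₂ 0 ^ 2 - p₁ 0 ^ 2 := by
    have henergy₁ := h₁.energy_eq hV t₁
    have henergy₂ := h₂.energy_eq hV t₂
    rw [hq, h₁.position_zero] at henergy₁
    rw [h₂.position_zero] at henergy₂
    linarith
  rcases hp.lt_or_gt with hp | hp
  · have hp_sq : p₁ 0 ^ 2 ≤ p₂ 0 ^ 2 :=
      pow_le_pow_left₀ (h₁.momentum_zero_nonneg ht₁) hp.le 2
    have hnonpos := h₁.later_arrival_momentum_nonpos h₂ hf_nonneg hf ht₁ ht hq hp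
    have hneg_le := abs_le_of_sq_le_sq' (a := p₁ t₁) (b := -p₂ t₂) (by linarith) (by linarith)
    linarith [hneg_le.1]
  · have hp_sq : p₂ 0 ^ 2 ≤ p₁ 0 ^ 2 :=
      pow_le_pow_left₀ (h₂.momentum_zero_nonneg (ht₁.trans_le ht)) hp.le 2
    have hnonneg := h₁.earlier_arrival_momentum_nonneg h₂ hf_nonneg hf ht₁ ht hq hp
    exact le_of_sq_le_sq (by linarith) hnonneg

end IsExcursion

end Newton

section Potential

/-- The bump `κ` with `g = 1 - κ⁴`; truncating `1 - x²` at `0` makes the identity hold on all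
of `ℝ`. -/
noncomputable def bump (x : ℝ) : ℝ := max (1 - x ^ 2) 0

variable {x : ℝ}

@[fun_prop]
theorem continuous_bump : Continuous bump := by
  unfold bump; fun_prop

theorem bump_zero : bump 0 = 1 := by norm_num [bump]

theorem bump_nonneg (x : ℝ) : 0 ≤ bump x := le_max_right _ _

theorem bump_le_one (x : ℝ) : bump x ≤ 1 := max_le (by linarith [sq_nonneg x]) zero_le_one

theorem bump_pos_of_mem_Ioo (hx : x ∈ Ioo (0 : ℝ) 1) : 0 < bump x :=
  lt_max_of_lt_left (by nlinarith [hx.1, hx.2])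

theorem antitoneOn_bump : AntitoneOn bump (Ici 0) := fun _ hx _ _ hxy =>
  max_le_max_right 0 (sub_le_sub_left (pow_le_pow_left₀ hx hxy 2) 1)

theorem bump_of_abs_le_one (hx : |x| ≤ 1) : bump x = 1 - x ^ 2 :=
  max_eq_left (sub_nonneg.2 ((sq_le_one_iff_abs_le_one x).2 hx))

theorem bump_of_one_lt_abs (hx : 1 < |x|) : bump x = 0 :=
  max_eq_right (sub_nonpos.2 ((one_lt_sq_iff_one_lt_abs x).2 hx).le)

theorem g_eq_one_sub_bump_pow (x : ℝ) : g x = 1 - bump x ^ 4 := by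
  unfold g
  split_ifs with hx
  · rw [bump_of_abs_le_one hx]
  · rw [bump_of_one_lt_abs (not_le.1 hx), zero_pow four_ne_zero, sub_zero]

theorem g'_eq_mul_bump_pow (x : ℝ) : g' x = 8 * x * bump x ^ 3 := by
  unfold g'
  split_ifs with hx
  · rw [bump_of_abs_le_one hx]
  · rw [bump_of_one_lt_abs (not_le.1 hx), zero_pow three_ne_zero, mul_zero]

theorem hasDerivAt_bump_sq (x : ℝ) :
    HasDerivAt (fun x => bump x ^ 2) (-(4 * x * bump x)) x :=
  (HasDerivAt.comp (h₂ := fun y => max y 0 ^ 2) x (hasDerivAt_max_zero_sq (1 - x ^ 2))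
    ((hasDerivAt_pow 2 x).const_sub 1)).congr_deriv (by rw [bump]; push_cast; ring)

theorem hasDerivAt_g (x : ℝ) : HasDerivAt g (g' x) x := by
  have hg : g = fun x => 1 - (bump x ^ 2) ^ 2 :=
    funext fun x => by rw [g_eq_one_sub_bump_pow, ← pow_mul]
  rw [hg, g'_eq_mul_bump_pow]
  exact (((hasDerivAt_bump_sq x).pow 2).const_sub 1).congr_deriv (by push_cast; ring)

theorem g_zero : g 0 = 0 := by rw [g_eq_one_sub_bump_pow, bump_zero]; norm_num

theorem g_le_one (x : ℝ) : g x ≤ 1 := by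
  rw [g_eq_one_sub_bump_pow]
  linarith [pow_nonneg (bump_nonneg x) 4]

theorem g_nonneg (x : ℝ) : 0 ≤ g x := by
  rw [g_eq_one_sub_bump_pow]
  linarith [pow_le_one₀ (n := 4) (bump_nonneg x) (bump_le_one x)]

theorem g'_nonneg_of_pos (x : ℝ) (hx : 0 < x) : 0 ≤ g' x := by
  rw [g'_eq_mul_bump_pow]
  exact mul_nonneg (by positivity) (pow_nonneg (bump_nonneg x) 3)

theorem antitoneOn_g'_div : AntitoneOn (fun x => g' x / x) (Ioi 0) := by
  have heq : EqOn (fun x => 8 * bump x ^ 3) (fun x => g' x / x) (Ioi 0) := fun x hx => by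
    have hx₀ : x ≠ 0 := ne_of_gt hx
    simp only [g'_eq_mul_bump_pow]
    field_simp
  refine AntitoneOn.congr (fun x hx y hy hxy => ?_) heq
  have hbump := antitoneOn_bump (Ioi_subset_Ici_self hx) (Ioi_subset_Ici_self hy) hxy
  have hpow := pow_le_pow_left₀ (bump_nonneg y) hbump 3
  linarith

end Potential

/-- A solution of (HS) with initial datum `(0, √2)`, on the level set of energy `1` that separates
the periodic orbits from the unbounded ones. -/
structure IsSeparatrixSol (q p : ℝ → ℝ) : Prop extends IsNewtonSol g' q p where
  position_zero : q 0 = 0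
  momentum_zero : p 0 = √2

section Separatrix

variable {q p : ℝ → ℝ} {x t : ℝ}

namespace IsSeparatrixSol

theorem momentum_eq (h : IsSeparatrixSol q p) (t : ℝ) : p t = √2 * bump (q t) ^ 2 := by
  have hq := h.continuous_position
  have hrate : Continuous fun t => 4 * √2 * q t * bump (q t) := by fun_prop
  have hlinear : ∀ t, HasDerivAt (fun t => p t - √2 * bump (q t) ^ 2)
      (4 * √2 * q t * bump (q t) * (p t - √2 * bump (q t) ^ 2)) t := fun t => by
    have hbump := (hasDerivAt_bump_sq (q t)).comp t (h.hasDerivAt_position t)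
    refine ((h.hasDerivAt_momentum t).sub (hbump.const_mul √2)).congr_deriv ?_
    rw [g'_eq_mul_bump_pow]
    linear_combination 4 * q t * bump (q t) ^ 3 * sq_sqrt (zero_le_two (α := ℝ))
  have hsol := eq_mul_exp_integral_of_hasDerivAt_eq_mul hrate hlinear t
  simpa [h.position_zero, h.momentum_zero, bump_zero, sub_eq_zero] using hsol

theorem momentum_pos (h : IsSeparatrixSol q p) (t : ℝ) : 0 < p t := by
  have hq := h.continuous_position
  have hrate : Continuous fun t => -(4 * √2 * q t * bump (q t)) := by fun_prop
  have hlinear : ∀ t, HasDerivAt p (-(4 * √2 * q t * bump (q t)) * p t) t := fun t => by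
    refine (h.hasDerivAt_momentum t).congr_deriv ?_
    rw [g'_eq_mul_bump_pow, h.momentum_eq t]
    linear_combination 4 * q t * bump (q t) ^ 3 * sq_sqrt (zero_le_two (α := ℝ))
  rw [eq_mul_exp_integral_of_hasDerivAt_eq_mul hrate hlinear t, h.momentum_zero]
  positivity

theorem strictMono_position (h : IsSeparatrixSol q p) : StrictMono q :=
  strictMono_of_hasDerivAt_pos h.hasDerivAt_position h.momentum_pos

theorem position_le_mul (h : IsSeparatrixSol q p) (ht : 0 ≤ t) : q t ≤ √2 * t := by
  have hp : ∀ s, 0 < s → p s ≤ √2 := fun s _ => by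
    rw [h.momentum_eq]
    exact mul_le_of_le_one_right (sqrt_nonneg 2) (pow_le_one₀ (bump_nonneg _) (bump_le_one _))
  simpa [h.position_zero] using h.position_sub_le_mul ht hp

theorem isExcursion (h : IsSeparatrixSol q p) (t : ℝ) : IsExcursion g' q p t where
  __ := h
  position_pos _ hs := h.position_zero ▸ h.strictMono_position hs.1

theorem exists_position_eq (h : IsSeparatrixSol q p) (hx : x ∈ Ioo (0 : ℝ) 1) :
    ∃ t, 0 ≤ t ∧ q t = x := by
  obtain ⟨t, ht, hxt⟩ : ∃ t, 0 ≤ t ∧ x ≤ q t := by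
    by_contra! hlt
    set c := √2 * bump x ^ 2
    have hc : 0 < c := mul_pos (by positivity) (pow_pos (bump_pos_of_mem_Ioo hx) 2)
    have hspeed : ∀ s, 0 < s → c ≤ p s := fun s hs => by
      have hqs : 0 ≤ q s := h.position_zero ▸ (h.strictMono_position hs).le
      have hbump : bump x ≤ bump (q s) := antitoneOn_bump hqs hx.1.le (hlt s hs.le).le
      rw [h.momentum_eq]
      exact mul_le_mul_of_nonneg_left (pow_le_pow_left₀ (bump_nonneg x) hbump 2) (sqrt_nonneg 2)
    have hdist := h.mul_le_position_sub (inv_nonneg.2 hc.le) hspeed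
    rw [mul_inv_cancel₀ hc.ne', h.position_zero] at hdist
    linarith [hlt c⁻¹ (inv_nonneg.2 hc.le), hx.2]
  obtain ⟨s, hs, hqs⟩ := intermediate_value_Icc ht h.continuous_position.continuousOn
    ⟨h.position_zero.trans_le hx.1.le, hxt⟩
  exact ⟨s, hs.1, hqs⟩

end IsSeparatrixSol

theorem IsNewtonSol.sqrt_two_mul_le_position (h : IsNewtonSol g' q p) (hq : 0 ≤ q 0)
    (hp : p 0 = 2) (ht : 0 ≤ t) : √2 * t ≤ q t := by
  have hp_sq : ∀ s, 2 ≤ p s ^ 2 := fun s => by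
    have henergy := h.energy_eq hasDerivAt_g s
    rw [hp] at henergy
    linarith [g_nonneg (q 0), g_le_one (q s)]
  have hp_pos : ∀ s, 0 < p s := fun s => by
    by_contra! hs
    obtain ⟨r, hr⟩ := mem_range_of_exists_le_of_exists_ge h.continuous_momentum
      ⟨s, hs⟩ ⟨0, hp ▸ zero_le_two⟩
    have hcontra := hp_sq r
    norm_num [hr] at hcontra
  have hdist := h.mul_le_position_sub ht fun s _ => sqrt_le_iff.2 ⟨(hp_pos s).le, hp_sq s⟩
  linarith

end Separatrix

section Flow

variable {F : ℝ → ℝ → ℝ → ℝ × ℝ} {Δ : ℝ → ℝ → ℝ × ℝ} {x t tx : ℝ}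

namespace IsHSFlow

theorem isNewtonSol (hF : IsHSFlow F) (q₀ p₀ : ℝ) :
    IsNewtonSol g' (fun t => (F t q₀ p₀).1) (fun t => (F t q₀ p₀).2) :=
  ⟨(hF q₀ p₀).1.1, (hF q₀ p₀).1.2⟩

theorem position_zero (hF : IsHSFlow F) (q₀ p₀ : ℝ) : (F 0 q₀ p₀).1 = q₀ :=
  congrArg Prod.fst (hF q₀ p₀).2

theorem momentum_zero (hF : IsHSFlow F) (q₀ p₀ : ℝ) : (F 0 q₀ p₀).2 = p₀ :=
  congrArg Prod.snd (hF q₀ p₀).2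

theorem isSeparatrixSol (hF : IsHSFlow F) :
    IsSeparatrixSol (fun t => (F t 0 √2).1) (fun t => (F t 0 √2).2) where
  __ := hF.isNewtonSol 0 √2
  position_zero := hF.position_zero 0 √2
  momentum_zero := hF.momentum_zero 0 √2

theorem eq_zero_and_mem_Ioo_of_position_lt (hF : IsHSFlow F) {q₀ p₀ : ℝ} (h₀ : (q₀, p₀) ∈ Dset)
    (ht : 0 < t) (hlt : (F t q₀ p₀).1 < (F t 0 √2).1) : q₀ = 0 ∧ p₀ ∈ Ioo 0 √2 := by
  rcases h₀ with ⟨hq₀, hp₀⟩ | ⟨hq₀, hp₀⟩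
  · have hfast : √2 * t ≤ (F t q₀ p₀).1 := (hF.isNewtonSol q₀ p₀).sqrt_two_mul_le_position
      ((hF.position_zero q₀ p₀).symm ▸ hq₀) ((hF.momentum_zero q₀ p₀).trans hp₀) ht.le
    exact absurd (hF.isSeparatrixSol.position_le_mul ht.le) (hfast.trans_lt hlt).not_ge
  · obtain rfl : q₀ = 0 := hq₀
    refine ⟨rfl, hp₀.1, ?_⟩
    by_contra! hge
    rcases hge.eq_or_lt with rfl | hgt
    · exact lt_irrefl _ hlt
    · exact hlt.not_gt <| (hF.isSeparatrixSol.isExcursion t).position_lt (hF.isNewtonSol 0 p₀)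
        antitoneOn_g'_div (hF.position_zero 0 p₀)
        (by simpa only [hF.momentum_zero] using hgt) (right_mem_Ioc.2 ht)

end IsHSFlow

theorem IsDeltaMap.exists_isExcursion (hΔ : IsDeltaMap F Δ) (hF : IsHSFlow F) (hx : 0 < x)
    (htx₀ : 0 ≤ tx) (htx : (F tx 0 √2).1 = x) (ht : tx < t) :
    ∃ p₀ ∈ Ioo 0 √2, usol F Δ t x = (F t 0 p₀).2 ∧ (F t 0 p₀).1 = x ∧
      IsExcursion g' (fun s => (F s 0 p₀).1) (fun s => (F s 0 p₀).2) t := by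
  have ht₀ : 0 < t := htx₀.trans_lt ht
  obtain ⟨hmem, harrive, hpos⟩ := hΔ t x ht₀ hx
  have hbehind : (F t (Δ t x).1 (Δ t x).2).1 < (F t 0 √2).1 := by
    rw [harrive, ← htx]
    exact hF.isSeparatrixSol.strictMono_position ht
  obtain ⟨hq₀, hp₀⟩ := hF.eq_zero_and_mem_Ioo_of_position_lt hmem ht₀ hbehind
  have husol : usol F Δ t x = (F t (Δ t x).1 (Δ t x).2).2 := if_pos hx
  rw [hq₀] at harrive hpos husol
  refine ⟨(Δ t x).2, hp₀, husol, harrive, hF.isNewtonSol _ _, hF.position_zero _ _, ?_⟩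
  intro s hs
  rcases hs.2.eq_or_lt with rfl | hst
  · exact harrive.symm ▸ hx
  · exact hpos s ⟨hs.1, hst⟩

theorem IsHSFlow.momentum_lt_sqrt (hF : IsHSFlow F) {p₀ : ℝ} (hp₀ : p₀ ∈ Ioo 0 √2) (t : ℝ) :
    (F t 0 p₀).2 < √(2 * (1 - g (F t 0 p₀).1)) := by
  have henergy := (hF.isNewtonSol 0 p₀).energy_eq hasDerivAt_g t
  simp only [hF.position_zero, hF.momentum_zero, g_zero] at henergy
  have hp₀_sq : p₀ ^ 2 < 2 := (lt_sqrt hp₀.1.le).1 hp₀.2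
  exact lt_sqrt_of_sq_lt (by linarith)

end Flow

/-- For `x ∈ (0,1)` and `q♭(t) = F_q(t,0,√2)` (so that `(q♭)⁻¹(x)` is well defined):
for every `t > (q♭)⁻¹(x)` one has `u(t,x) < √(2(1-g(x)))`, and `t ↦ u(t,x)` is
nonincreasing on `((q♭)⁻¹(x), +∞)`. -/
theorem stmt_17 (F : ℝ → ℝ → ℝ → ℝ × ℝ) (hF : IsHSFlow F)
    (Δ : ℝ → ℝ → ℝ × ℝ) (hΔ : IsDeltaMap F Δ)
    (x : ℝ) (hx : x ∈ Ioo (0:ℝ) 1) :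
    (∃ tx : ℝ, 0 ≤ tx ∧ (F tx 0 (Real.sqrt 2)).1 = x) ∧
    ∀ tx : ℝ, 0 ≤ tx → (F tx 0 (Real.sqrt 2)).1 = x →
      (∀ t : ℝ, tx < t → usol F Δ t x < Real.sqrt (2 * (1 - g x))) ∧
      AntitoneOn (fun t => usol F Δ t x) (Ioi tx) := by
  refine ⟨hF.isSeparatrixSol.exists_position_eq hx, fun tx htx₀ htx => ⟨fun t ht => ?_, ?_⟩⟩
  · obtain ⟨p₀, hp₀, husol, harrive, -⟩ := hΔ.exists_isExcursion hF hx.1 htx₀ htx ht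
    rw [husol, ← harrive]
    exact hF.momentum_lt_sqrt hp₀ t
  · intro t₁ ht₁ t₂ ht₂ hle
    have ht₁_pos : 0 < t₁ := htx₀.trans_lt ht₁
    obtain ⟨a, -, husol₁, harrive₁, horbit₁⟩ := hΔ.exists_isExcursion hF hx.1 htx₀ htx ht₁
    obtain ⟨b, -, husol₂, harrive₂, horbit₂⟩ := hΔ.exists_isExcursion hF hx.1 htx₀ htx ht₂
    change usol F Δ t₂ x ≤ usol F Δ t₁ x
    rw [husol₁, husol₂]
    rcases eq_or_ne a b with rfl | hab
    · exact horbit₂.antitoneOn_momentum g'_nonneg_of_pos ⟨ht₁_pos.le, hle⟩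
        (right_mem_Icc.2 (ht₁_pos.le.trans hle)) hle
    · exact horbit₁.arrival_momentum_le horbit₂ g'_nonneg_of_pos antitoneOn_g'_div ht₁_pos hle
        (harrive₁.trans harrive₂.symm) hasDerivAt_g (by simpa only [hF.momentum_zero] using hab)
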